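/- Let S be a finite multiset of natural numbers and let ℓ₁, ℓ₂ be natural numbers with S.sum = ℓ₁ + ℓ₂, and let d = |ℓ₁ − ℓ₂| (i.e., d = max(ℓ₁,ℓ₂) − min(ℓ₁,ℓ₂)). Then S can be partitioned into two submultisets whose sums are ℓ₁ and ℓ₂ if and only if the multiset obtained from S by adding one new element equal to d can be partitioned into two submultisets of equal sum. Formally: (∃ T ≤ S, T.sum = ℓ₁) ↔ (∃ U ≤ d ::ₘ S, 2 · U.sum = (d ::ₘ S).sum). -/

import Mathlib

/-!
Since `S.sum + d = 2 * max ℓ₁ ℓ₂`, an equal-sum half of `d ::ₘ S` is a submultiset of sum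
`max ℓ₁ ℓ₂`. Removing `d` from the half that contains it leaves a submultiset of `S` of sum
`min ℓ₁ ℓ₂`; conversely, adding `d` to a part of sum `min ℓ₁ ℓ₂` balances the two parts. Passing to
the complement in `S` exchanges the sums `ℓ₁` and `ℓ₂` (`exists_sum_eq_left`).
-/

theorem exists_sum_eq_left {S V : Multiset ℕ} {ℓ₁ ℓ₂ : ℕ} (h : S.sum = ℓ₁ + ℓ₂) (hV : V ≤ S)
    (hs : V.sum = ℓ₁ ∨ V.sum = ℓ₂) : ∃ T ≤ S, T.sum = ℓ₁ := by
  rcases hs with hs | hs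
  · exact ⟨V, hV, hs⟩
  · obtain ⟨W, rfl⟩ := Multiset.le_iff_exists_add.mp hV
    refine ⟨W, Multiset.le_add_left _ _, ?_⟩
    rw [Multiset.sum_add] at h
    omega

/-- Splitting a multiset `S` of naturals into two submultisets
with prescribed sums `ℓ₁` and `ℓ₂` (where `S.sum = ℓ₁ + ℓ₂`) is equivalent to
the Partition problem on the multiset obtained from `S` by adding one new
element `d = |ℓ₁ - ℓ₂|`. -/
theorem prescribed_sums_iff_partition (S : Multiset ℕ) (ℓ₁ ℓ₂ : ℕ)
    (h : S.sum = ℓ₁ + ℓ₂) (d : ℕ) (hd : d = max ℓ₁ ℓ₂ - min ℓ₁ ℓ₂) :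
    (∃ T ≤ S, T.sum = ℓ₁) ↔ (∃ U ≤ d ::ₘ S, 2 * U.sum = (d ::ₘ S).sum) := by
  rw [Multiset.sum_cons]
  constructor
  · rintro ⟨T, hT, hs⟩
    rcases le_total ℓ₂ ℓ₁ with hl | hl
    · exact ⟨T, hT.trans (Multiset.le_cons_self S d), by omega⟩
    · refine ⟨d ::ₘ T, Multiset.cons_le_cons d hT, ?_⟩
      rw [Multiset.sum_cons]
      omega
  · rintro ⟨U, hU, hs⟩
    by_cases hmem : d ∈ U
    · obtain ⟨V, rfl⟩ := Multiset.exists_cons_of_mem hmem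
      rw [Multiset.sum_cons] at hs
      exact exists_sum_eq_left h ((Multiset.cons_le_cons_iff d).mp hU) (by omega)
    · exact exists_sum_eq_left h ((Multiset.le_cons_of_notMem hmem).mp hU) (by omega)
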